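/- Let G be a graph containing no cycle of length 5 (as a subgraph), and let v ∈ V(G). If N2(v) dominates N(v), then every maximal independent set of the induced subgraph G[N2(v)] dominates N(v). -/

import Mathlib

open SimpleGraph

/-- A set of vertices is independent if its elements are pairwise nonadjacent. -/
def IsIndep {V : Type*} (G : SimpleGraph V) (S : Set V) : Prop :=
  S.Pairwise fun a b => ¬ G.Adj a b

/-- The closed neighborhood `N[S]` of a set of vertices. -/
def closedNbhd {V : Type*} (G : SimpleGraph V) (S : Set V) : Set V :=
  S ∪ {x | ∃ s ∈ S, G.Adj s x}

/-- The open neighborhood `N(S) = N[S] \ S` of a set of vertices. -/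
def openNbhd {V : Type*} (G : SimpleGraph V) (S : Set V) : Set V :=
  closedNbhd G S \ S

/-- `S` dominates `T` if `T ⊆ N[S]`. -/
def Dominates {V : Type*} (G : SimpleGraph V) (S T : Set V) : Prop :=
  T ⊆ closedNbhd G S

/-- `N₂(v)`: the set of vertices at distance exactly 2 from `v`. -/
def N2 {V : Type*} (G : SimpleGraph V) (v : V) : Set V :=
  {u | u ≠ v ∧ ¬ G.Adj v u ∧ ∃ w, G.Adj v w ∧ G.Adj w u}

/-- A maximal independent set of the subgraph of `G` induced by `A`. -/
def IsMaximalIndepOn {V : Type*} (G : SimpleGraph V) (A S : Set V) : Prop :=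
  S ⊆ A ∧ IsIndep G S ∧ ∀ T, T ⊆ A → IsIndep G T → S ⊆ T → S = T

/-- A maximal independent set of `G`. -/
def IsMaximalIndep {V : Type*} (G : SimpleGraph V) (S : Set V) : Prop :=
  IsMaximalIndepOn G Set.univ S

/-- A maximum independent set of the subgraph of `G` induced by `A`. -/
def IsMaxIndepOn {V : Type*} (G : SimpleGraph V) (A S : Set V) : Prop :=
  S ⊆ A ∧ IsIndep G S ∧ ∀ T, T ⊆ A → IsIndep G T → T.ncard ≤ S.ncard

/-- A maximum independent set of `G`. -/
def IsMaxIndep {V : Type*} (G : SimpleGraph V) (S : Set V) : Prop :=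
  IsMaxIndepOn G Set.univ S

/-- The independence number of the subgraph of `G` induced by `A`. -/
noncomputable def alphaOn {V : Type*} (G : SimpleGraph V) (A : Set V) : ℕ :=
  sSup {n | ∃ S, S ⊆ A ∧ IsIndep G S ∧ S.ncard = n}

/-- The independence number `α(G)`. -/
noncomputable def alpha {V : Type*} (G : SimpleGraph V) : ℕ :=
  alphaOn G Set.univ

/-- The subgraph of `G` induced by `A` is well-covered. -/
def WellCoveredOn {V : Type*} (G : SimpleGraph V) (A : Set V) : Prop :=
  ∀ S, IsMaximalIndepOn G A S → IsMaxIndepOn G A S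

/-- `G` is well-covered: every maximal independent set is maximum. -/
def WellCovered {V : Type*} (G : SimpleGraph V) : Prop :=
  WellCoveredOn G Set.univ

/-- The subgraph of `G` induced by `A` is in the class `W₂`. -/
def W2On {V : Type*} (G : SimpleGraph V) (A : Set V) : Prop :=
  ∀ S₁ S₂ : Set V, S₁ ⊆ A → S₂ ⊆ A → IsIndep G S₁ → IsIndep G S₂ → Disjoint S₁ S₂ →
    ∃ T₁ T₂ : Set V, S₁ ⊆ T₁ ∧ S₂ ⊆ T₂ ∧ IsMaxIndepOn G A T₁ ∧ IsMaxIndepOn G A T₂ ∧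
      Disjoint T₁ T₂

/-- `G` belongs to the class `W₂`: every two pairwise disjoint independent sets are
included in two pairwise disjoint maximum independent sets. -/
def W2 {V : Type*} (G : SimpleGraph V) : Prop :=
  W2On G Set.univ

/-- `v` is a shedding vertex: for every independent set `S ⊆ V(G) \ N[v]` there exists
`u ∈ N(v)` such that `S ∪ {u}` is independent. -/
def Shedding {V : Type*} (G : SimpleGraph V) (v : V) : Prop :=
  ∀ S : Set V, Disjoint S (closedNbhd G {v}) → IsIndep G S →
    ∃ u ∈ G.neighborSet v, IsIndep G (insert u S)

/-- The edge `xy` is relating: there is an independent set `S ⊆ V(G) \ N[{x,y}]` such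
that both `S ∪ {x}` and `S ∪ {y}` are maximal independent sets of `G`. -/
def Relating {V : Type*} (G : SimpleGraph V) (x y : V) : Prop :=
  ∃ S : Set V, IsIndep G S ∧ Disjoint S (closedNbhd G {x, y}) ∧
    IsMaximalIndep G (insert x S) ∧ IsMaximalIndep G (insert y S)

/-- `G` contains no cycle of length `k` (as a subgraph). -/
def CycleFree {V : Type*} (G : SimpleGraph V) (k : ℕ) : Prop :=
  ∀ (u : V) (w : G.Walk u u), w.IsCycle → w.length ≠ k

/-- A vertex is simplicial if its closed neighborhood is a clique. -/
def Simplicial {V : Type*} (G : SimpleGraph V) (v : V) : Prop :=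
  G.IsClique (closedNbhd G {v})

section

variable {V : Type*} {G : SimpleGraph V}

theorem exists_isCycle_length_eq_five {a b c d e : V} (hab : G.Adj a b) (hbc : G.Adj b c)
    (hcd : G.Adj c d) (hde : G.Adj d e) (hea : G.Adj e a) (hac : a ≠ c) (had : a ≠ d)
    (hbd : b ≠ d) (hbe : b ≠ e) (hce : c ≠ e) :
    ∃ p : G.Walk a a, p.IsCycle ∧ p.length = 5 := by
  refine ⟨.cons hab (.cons hbc (.cons hcd (.cons hde (.cons hea .nil)))), ?_, rfl⟩
  simp [Walk.cons_isCycle_iff, Walk.cons_isPath_iff, hab.ne, hab.ne', hbc.ne, hcd.ne, hde.ne,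
    hea.ne, hac, hac.symm, had.symm, hbd, hbe, hce]

theorem IsIndep.insert {S : Set V} {w : V} (hS : IsIndep G S) (hw : ∀ s ∈ S, ¬ G.Adj s w) :
    IsIndep G (insert w S) :=
  Set.Pairwise.insert hS fun s hs _ => ⟨fun hws => hw s hs hws.symm, hw s hs⟩

theorem IsMaximalIndepOn.dominates {A S : Set V} (hS : IsMaximalIndepOn G A S) :
    Dominates G S A := by
  obtain ⟨hSA, hindep, hmax⟩ := hS
  intro w hwA
  by_cases hadj : ∃ s ∈ S, G.Adj s w
  · exact Or.inr hadj
  · push Not at hadj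
    have hS_eq : S = insert w S :=
      hmax _ (Set.insert_subset hwA hSA) (hindep.insert hadj) (Set.subset_insert w S)
    exact Or.inl (hS_eq ▸ Set.mem_insert w S)

theorem adj_of_adj_adj_of_mem_N2 {v u w s : V}
    (h5 : ∀ p : G.Walk v v, p.IsCycle → p.length ≠ 5) (hvu : G.Adj v u) (huw : G.Adj u w)
    (hws : G.Adj w s) (hw : w ∈ N2 G v) (hs : s ∈ N2 G v) : G.Adj s u := by
  obtain ⟨hwv, hvw, -⟩ := hw
  obtain ⟨hsv, hvs, x, hvx, hxs⟩ := hs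
  -- Otherwise `x ≠ u`, and `v u w s x` is a 5-cycle.
  by_contra hsu
  have hus : u ≠ s := fun h => hvs (h ▸ hvu)
  have hux : u ≠ x := fun h => hsu (h ▸ hxs.symm)
  have hwx : w ≠ x := fun h => hvw (h ▸ hvx)
  obtain ⟨p, hp, hlen⟩ := exists_isCycle_length_eq_five hvu huw hws hxs.symm hvx.symm
    hwv.symm hsv.symm hus hux hwx
  exact h5 p hp hlen

theorem stmt8_general {v : V} {S : Set V} (h5 : ∀ p : G.Walk v v, p.IsCycle → p.length ≠ 5)
    (hdom : Dominates G (N2 G v) (G.neighborSet v)) (hS : S ⊆ N2 G v)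
    (hSdom : Dominates G S (N2 G v)) :
    Dominates G S (G.neighborSet v) := by
  intro u hvu
  obtain hu | ⟨w, hw, hwu⟩ := hdom hvu
  · exact hSdom hu
  · obtain hwS | ⟨s, hs, hsw⟩ := hSdom hw
    · exact Or.inr ⟨w, hwS, hwu⟩
    · exact Or.inr ⟨s, hs, adj_of_adj_adj_of_mem_N2 h5 hvu hwu.symm hsw.symm hw (hS hs)⟩

end

/-- In a graph with no cycle of length 5, if `N₂(v)` dominates `N(v)` then
every maximal independent set of `G[N₂(v)]` dominates `N(v)`. -/
theorem stmt8 {V : Type*} [Fintype V] (G : SimpleGraph V)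
    (h5 : CycleFree G 5) (v : V)
    (hdom : Dominates G (N2 G v) (G.neighborSet v))
    (S : Set V) (hS : IsMaximalIndepOn G (N2 G v) S) :
    Dominates G S (G.neighborSet v) :=
  stmt8_general (h5 v) hdom hS.1 hS.dominates
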